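/- Chain rule for divided differences (Faà di Bruno type): if f = g ∘ φ with g and φ sufficiently smooth, then f[x_0, ..., x_n] = ∑_{k=1}^{n} ∑_{0 = i_0 < i_1 < ⋯ < i_k = n} g[φ(x_{i_0}), ..., φ(x_{i_k})] ∏_{j=0}^{k-1} φ[x_{i_j}, x_{i_j + 1}, ..., x_{i_{j+1}}]. -/

import Mathlib

open MeasureTheory

/-- The divided difference `f[x₀,…,xₙ]`, defined for `Cⁿ` functions (and
arbitrary, possibly coinciding, points) via Hermite's integral representation
`f[x₀,…,xₙ] = ∫_{Δₙ} f⁽ⁿ⁾(s₀x₀ + ⋯ + sₙxₙ) dⁿs`; it agrees with the usual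
recursive definition on distinct points and extends it continuously. -/
noncomputable def divDiff {E : Type*} [NormedAddCommGroup E] [NormedSpace ℝ E]
    (f : ℝ → E) (n : ℕ) (x : Fin (n + 1) → ℝ) : E :=
  ∫ s in {s : Fin n → ℝ | (∀ i, 0 ≤ s i) ∧ ∑ i, s i ≤ 1},
    iteratedDeriv n f ((1 - ∑ i, s i) * x 0 + ∑ i : Fin n, s i * x i.succ)

/-!
Integrating along the rays from the origin in Hermite's integral over the simplex gives
`f[x₀, …, xₙ₊₁] = (dslope f x₀)[x₁, …, xₙ₊₁]`, valid also at coinciding points. Hence every rule for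
`dslope` becomes a rule for divided differences by peeling off the first point. Iterating the
product rule for `dslope` yields Leibniz' rule
`(u v)[x_a, …, x_b] = ∑_c u[x_a, …, x_c] v[x_c, …, x_b]`.
Applied to `dslope (g ∘ φ) x_a = dslope φ x_a • (dslope g (φ x_a) ∘ φ)`, it gives
`(g ∘ φ)[x_a, …, x_b] = ∑_{a < c ≤ b} φ[x_a, …, x_c] (dslope g (φ x_a) ∘ φ)[x_c, …, x_b]`,
which is the recursion obtained by removing the first index from the chains in the chain rule.
-/

section Slope

variable {𝕜 F : Type*} [NontriviallyNormedField 𝕜] [NormedAddCommGroup F] [NormedSpace 𝕜 F]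
  {a : 𝕜}

theorem dslope_smul {u : 𝕜 → 𝕜} {v : 𝕜 → F} (hu : DifferentiableAt 𝕜 u a)
    (hv : DifferentiableAt 𝕜 v a) :
    dslope (u • v) a = dslope u a • v + u a • dslope v a := by
  funext b
  rcases eq_or_ne b a with rfl | hb
  · simp only [dslope_same, deriv_smul hu hv, Pi.add_apply, Pi.smul_apply, Pi.smul_apply', add_comm]
  · apply smul_right_injective F (sub_ne_zero.2 hb)
    simp only [Pi.add_apply, Pi.smul_apply, Pi.smul_apply', smul_add, sub_smul_dslope,
      smul_comm (b - a) (u a), ← smul_assoc (b - a)]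
    module

theorem dslope_comp {φ : 𝕜 → 𝕜} {g : 𝕜 → F} (hφ : DifferentiableAt 𝕜 φ a)
    (hg : DifferentiableAt 𝕜 g (φ a)) :
    dslope (g ∘ φ) a = dslope φ a • (dslope g (φ a) ∘ φ) := by
  funext b
  rcases eq_or_ne b a with rfl | hb
  · simp only [dslope_same, deriv.scomp b hg hφ, Pi.smul_apply', Function.comp_apply]
  · apply smul_right_injective F (sub_ne_zero.2 hb)
    simp only [Pi.smul_apply', Function.comp_apply, sub_smul_dslope, ← smul_assoc (b - a)]

end Slope

section SegmentMoment

variable {E : Type*} [NormedAddCommGroup E] [NormedSpace ℝ E]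

/-- The `k`-th moment `∫₀¹ tᵏ h(a + t (b - a)) dt` of `h` along the segment from `a` to `b`. The
iterated derivatives of `dslope f a` are moments of those of `f`. -/
noncomputable def segmentMoment (k : ℕ) (h : ℝ → E) (a b : ℝ) : E :=
  ∫ t in (0 : ℝ)..1, t ^ k • h (a + t * (b - a))

theorem continuous_segmentMoment (k : ℕ) {h : ℝ → E} (hh : Continuous h) (a : ℝ) :
    Continuous (segmentMoment k h a) :=
  intervalIntegral.continuous_parametric_intervalIntegral_of_continuous' (by fun_prop) 0 1

theorem hasDerivAt_segmentMoment (k : ℕ) {h : ℝ → E} (hh : ContDiff ℝ 1 h) (a b : ℝ) :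
    HasDerivAt (segmentMoment k h a) (segmentMoment (k + 1) (deriv h) a b) b := by
  have : Continuous (deriv h) := hh.continuous_deriv_one
  let F' : ℝ → ℝ → E := fun y t => t ^ (k + 1) • deriv h (a + t * (y - a))
  have hF' : Continuous (Function.uncurry F') := by fun_prop
  obtain ⟨C, hC⟩ := ((isCompact_Icc (a := b - 1) (b := b + 1)).prod
    (isCompact_Icc (a := (0 : ℝ)) (b := 1))).exists_bound_of_continuousOn hF'.continuousOn
  have hderiv (t y : ℝ) : HasDerivAt (fun y => t ^ k • h (a + t * (y - a))) (F' y t) y := by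
    have hline : HasDerivAt (fun y : ℝ => a + t * (y - a)) t y := by
      simpa using (((hasDerivAt_id y).sub_const a).const_mul t).const_add a
    have hcomp := (hh.differentiable_one _).hasDerivAt.scomp y hline
    simpa only [F', pow_succ, mul_smul, Function.comp_apply] using hcomp.fun_const_smul (t ^ k)
  refine (intervalIntegral.hasDerivAt_integral_of_dominated_loc_of_deriv_le
    (F := fun y t => t ^ k • h (a + t * (y - a))) (F' := F') (bound := fun _ => C)
    (Icc_mem_nhds (sub_one_lt b) (lt_add_one b)) ?_ ?_ ?_ ?_ intervalIntegrable_const ?_).2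
  · exact .of_forall fun y => Continuous.aestronglyMeasurable (by fun_prop)
  · exact Continuous.intervalIntegrable (by fun_prop) _ _
  · exact Continuous.aestronglyMeasurable (by fun_prop)
  · refine .of_forall fun t ht y hy => ?_
    rw [Set.uIoc_of_le zero_le_one] at ht
    exact hC (y, t) ⟨hy, ht.1.le, ht.2⟩
  · exact .of_forall fun t _ y _ => hderiv t y

theorem deriv_segmentMoment (k : ℕ) {h : ℝ → E} (hh : ContDiff ℝ 1 h) (a : ℝ) :
    deriv (segmentMoment k h a) = segmentMoment (k + 1) (deriv h) a :=
  funext fun b => (hasDerivAt_segmentMoment k hh a b).deriv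

theorem iteratedDeriv_segmentMoment (k : ℕ) {n : ℕ} {h : ℝ → E} (hh : ContDiff ℝ n h) (a : ℝ) :
    iteratedDeriv n (segmentMoment k h a) = segmentMoment (k + n) (iteratedDeriv n h) a := by
  induction n generalizing k h with
  | zero => simp only [iteratedDeriv_zero, add_zero]
  | succ n ih =>
    rw [iteratedDeriv_succ', deriv_segmentMoment k (hh.of_le (mod_cast n.succ_pos)),
      ih (k + 1) hh.deriv', iteratedDeriv_succ', add_right_comm, add_assoc]

theorem contDiff_segmentMoment (k : ℕ) {n : ℕ} {h : ℝ → E} (hh : ContDiff ℝ n h) (a : ℝ) :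
    ContDiff ℝ n (segmentMoment k h a) := by
  induction n generalizing k h with
  | zero => exact contDiff_zero.2 (continuous_segmentMoment k hh.continuous a)
  | succ n ih =>
    have hh1 : ContDiff ℝ 1 h := hh.of_le (mod_cast n.succ_pos)
    refine (contDiff_succ_iff_deriv (n := n)).2
      ⟨fun b => (hasDerivAt_segmentMoment k hh1 a b).differentiableAt, by simp, ?_⟩
    rw [deriv_segmentMoment k hh1]
    exact ih (k + 1) hh.deriv'

variable [CompleteSpace E]

theorem dslope_eq_segmentMoment {f : ℝ → E} (hf : ContDiff ℝ 1 f) (a : ℝ) :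
    dslope f a = segmentMoment 0 (deriv f) a := by
  funext b
  rcases eq_or_ne b a with rfl | hb
  · simp [segmentMoment]
  · apply smul_right_injective E (sub_ne_zero.2 hb)
    have : Continuous (deriv f) := hf.continuous_deriv_one
    have hftc := intervalIntegral.integral_unitInterval_deriv_eq_sub (f := f) (f' := deriv f)
      (z₀ := a) (z₁ := b - a) (Continuous.continuousOn (by fun_prop))
      fun t _ => (hf.differentiable_one _).hasDerivAt
    simp only [sub_smul_dslope, segmentMoment, pow_zero, one_smul]
    simpa using hftc.symm

theorem contDiff_dslope {n : ℕ} {f : ℝ → E} (hf : ContDiff ℝ (n + 1 : ℕ) f) (a : ℝ) :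
    ContDiff ℝ n (dslope f a) := by
  rw [dslope_eq_segmentMoment (hf.of_le (mod_cast n.succ_pos))]
  exact contDiff_segmentMoment 0 hf.deriv' a

theorem iteratedDeriv_dslope {n : ℕ} {f : ℝ → E} (hf : ContDiff ℝ (n + 1 : ℕ) f) (a : ℝ) :
    iteratedDeriv n (dslope f a) = segmentMoment n (iteratedDeriv (n + 1) f) a := by
  rw [dslope_eq_segmentMoment (hf.of_le (mod_cast n.succ_pos)),
    iteratedDeriv_segmentMoment 0 hf.deriv', zero_add, iteratedDeriv_succ']

end SegmentMoment

section Simplex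

/-- The simplex `{s ∈ ℝⁿ | 0 ≤ s, ∑ᵢ sᵢ ≤ 1}`, the domain of integration in `divDiff`. -/
def cornerSimplex (n : ℕ) : Set (Fin n → ℝ) := {s | (∀ i, 0 ≤ s i) ∧ ∑ i, s i ≤ 1}

/-- The barycentric coordinates `(1 - ∑ᵢ τᵢ, τ₀, …, τₙ₋₁)` of the point `τ` of `ℝⁿ` with respect to
the vertices of the corner simplex, the origin coming first. -/
def barycentric {n : ℕ} (τ : Fin n → ℝ) : Fin (n + 1) → ℝ := Fin.cons (1 - ∑ i, τ i) τ

theorem isCompact_cornerSimplex (n : ℕ) : IsCompact (cornerSimplex n) := by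
  have hclosed : IsClosed (cornerSimplex n) := by
    simp only [cornerSimplex, Set.ofPred_and, Set.ofPred_forall]
    exact (isClosed_iInter fun i => isClosed_le (by fun_prop) (by fun_prop)).inter
      (isClosed_le (by fun_prop) (by fun_prop))
  refine (isCompact_Icc (a := (0 : Fin n → ℝ)) (b := 1)).of_isClosed_subset hclosed
    fun s hs => ⟨hs.1, fun i => ?_⟩
  exact (Finset.single_le_sum (fun j _ => hs.1 j) (Finset.mem_univ i)).trans hs.2

theorem continuous_barycentric (n : ℕ) : Continuous (barycentric (n := n)) := by
  unfold barycentric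
  fun_prop

theorem smul_barycentric_mem_cornerSimplex {n : ℕ} {t : ℝ} (ht : t ≠ 0) (τ : Fin n → ℝ) :
    t • barycentric τ ∈ cornerSimplex (n + 1) ↔ t ∈ Set.Ioc 0 1 ∧ τ ∈ cornerSimplex n := by
  have hsum : ∑ i, (t • barycentric τ) i = t := by
    simp [barycentric, Fin.sum_univ_succ, ← Finset.mul_sum]
  rcases ht.lt_or_gt with hneg | hpos
  · refine ⟨fun hs => absurd (hsum ▸ Finset.sum_nonneg fun i _ => hs.1 i) hneg.not_ge,
      fun h => absurd h.1.1 hneg.not_gt⟩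
  · simp only [cornerSimplex, Set.mem_ofPred_eq, hsum]
    simp only [barycentric, Fin.forall_fin_succ, Pi.smul_apply, smul_eq_mul, Fin.cons_zero,
      Fin.cons_succ, mul_nonneg_iff_of_pos_left hpos, sub_nonneg, Set.mem_Ioc, hpos, true_and]
    tauto

variable {E : Type*} [NormedAddCommGroup E] [NormedSpace ℝ E]

theorem measurePreserving_cons_sub_sum (n : ℕ) :
    MeasurePreserving fun p : (Fin n → ℝ) × ℝ =>
      (Fin.cons (p.2 - ∑ i, p.1 i) p.1 : Fin (n + 1) → ℝ) := by
  have hshear : MeasurePreserving fun p : (Fin n → ℝ) × ℝ => (p.1, p.2 - ∑ i, p.1 i) :=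
    (MeasurePreserving.id volume).skew_product (g := fun (v : Fin n → ℝ) t => t - ∑ i, v i)
      (by fun_prop)
      (.of_forall fun v => (measurePreserving_sub_right volume (∑ i, v i)).map_eq)
  have hcons := (volume_preserving_piFinSuccAbove (fun _ : Fin (n + 1) => ℝ) 0).symm
  simpa only [Function.comp_def, MeasurableEquiv.piFinSuccAbove_symm_apply,
    Fin.insertNthEquiv_zero, Fin.consEquiv, Equiv.coe_fn_mk, Prod.swap] using
    hcons.comp (Measure.measurePreserving_swap.comp hshear)

theorem integral_fin_succ_eq_integral_smul_barycentric {n : ℕ} {F : (Fin (n + 1) → ℝ) → E}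
    (hF : Integrable F) :
    ∫ s, F s = ∫ t : ℝ, |t| ^ n • ∫ τ : Fin n → ℝ, F (t • barycentric τ) := by
  have hcone := measurePreserving_cons_sub_sum n
  have hscale (t : ℝ) (τ : Fin n → ℝ) :
      (Fin.cons (t - ∑ i, (t • τ) i) (t • τ) : Fin (n + 1) → ℝ) = t • barycentric τ := by
    funext i
    cases i using Fin.cases <;> simp [barycentric, ← Finset.mul_sum, mul_sub]
  calc ∫ s, F s
      = ∫ p : (Fin n → ℝ) × ℝ, F (Fin.cons (p.2 - ∑ i, p.1 i) p.1) := by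
        rw [← integral_map (f := F) hcone.aemeasurable (hcone.map_eq ▸ hF.1), hcone.map_eq]
    _ = ∫ t : ℝ, ∫ v : Fin n → ℝ, F (Fin.cons (t - ∑ i, v i) v) :=
        integral_prod_symm _ (hcone.integrable_comp_of_integrable hF)
    _ = ∫ t : ℝ, |t| ^ n • ∫ τ : Fin n → ℝ, F (t • barycentric τ) := by
        refine integral_congr_ae ?_
        filter_upwards [Measure.ae_ne volume (0 : ℝ)] with t ht
        simp only [← hscale t]
        rw [Measure.integral_comp_smul volume (fun v => F (Fin.cons (t - ∑ i, v i) v)),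
          Module.finrank_fin_fun, abs_inv, abs_pow, smul_inv_smul₀ (by positivity)]

theorem setIntegral_cornerSimplex_succ {n : ℕ} {F : (Fin (n + 1) → ℝ) → E} (hF : Continuous F) :
    ∫ s in cornerSimplex (n + 1), F s =
      ∫ τ in cornerSimplex n, ∫ t in (0 : ℝ)..1, t ^ n • F (t • barycentric τ) := by
  have hmeas (m : ℕ) : MeasurableSet (cornerSimplex m) := (isCompact_cornerSimplex m).measurableSet
  have hFΔ : Integrable ((cornerSimplex (n + 1)).indicator F) :=
    (integrable_indicator_iff (hmeas _)).2
      (hF.continuousOn.integrableOn_compact (isCompact_cornerSimplex _))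
  have hind {t : ℝ} (ht : t ≠ 0) (τ : Fin n → ℝ) :
      |t| ^ n • (cornerSimplex (n + 1)).indicator F (t • barycentric τ) =
        (Set.Ioc 0 1).indicator (fun t => (cornerSimplex n).indicator
          (fun τ => t ^ n • F (t • barycentric τ)) τ) t := by
    classical
    simp only [Set.indicator_apply, smul_barycentric_mem_cornerSimplex ht, ite_and, smul_ite,
      smul_zero]
    split_ifs with hpos
    · rw [abs_of_pos hpos.1]
    all_goals rfl
  have hswap : Integrable (Function.uncurry fun (t : ℝ) (τ : Fin n → ℝ) =>
      t ^ n • F (t • barycentric τ))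
      ((volume.restrict (Set.uIoc 0 1)).prod (volume.restrict (cornerSimplex n))) := by
    have := continuous_barycentric n
    rw [Measure.prod_restrict, Set.uIoc_of_le zero_le_one]
    refine (Continuous.continuousOn ?_).integrableOn_compact
      (isCompact_Icc.prod (isCompact_cornerSimplex n)) |>.mono_set
        (Set.prod_mono_left Set.Ioc_subset_Icc_self)
    fun_prop
  rw [← intervalIntegral_integral_swap hswap, ← integral_indicator (hmeas _),
    integral_fin_succ_eq_integral_smul_barycentric hFΔ, intervalIntegral.integral_of_le zero_le_one,
    ← integral_indicator measurableSet_Ioc]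
  refine integral_congr_ae ?_
  filter_upwards [Measure.ae_ne volume (0 : ℝ)] with t ht
  simp only [← integral_smul, hind ht]
  by_cases hpos : t ∈ Set.Ioc (0 : ℝ) 1
  · simp only [Set.indicator_of_mem hpos, integral_indicator (hmeas n)]
  · simp only [Set.indicator_of_notMem hpos, integral_zero]

end Simplex

section DivDiff

variable {E : Type*} [NormedAddCommGroup E] [NormedSpace ℝ E] {n : ℕ}

theorem divDiff_eq_setIntegral_cornerSimplex (f : ℝ → E) (x : Fin (n + 1) → ℝ) :
    divDiff f n x = ∫ τ in cornerSimplex n, iteratedDeriv n f (barycentric τ ⬝ᵥ x) := by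
  simp only [divDiff, cornerSimplex, barycentric, dotProduct, Fin.sum_univ_succ, Fin.cons_zero,
    Fin.cons_succ]

theorem divDiff_congr {m : ℕ} (h : m = n) (f : ℝ → E) {x : Fin (m + 1) → ℝ} {y : Fin (n + 1) → ℝ}
    (hxy : ∀ i, x i = y (i.cast (congrArg (· + 1) h))) : divDiff f m x = divDiff f n y := by
  subst h
  exact congrArg _ (funext hxy)

theorem divDiff_const_smul {f : ℝ → E} (hf : ContDiff ℝ n f) (c : ℝ) (x : Fin (n + 1) → ℝ) :
    divDiff (c • f) n x = c • divDiff f n x := by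
  simp only [divDiff, iteratedDeriv_const_smul hf.contDiffAt, integral_smul]

theorem divDiff_add {f g : ℝ → E} (hf : ContDiff ℝ n f) (hg : ContDiff ℝ n g)
    (x : Fin (n + 1) → ℝ) : divDiff (f + g) n x = divDiff f n x + divDiff g n x := by
  have := continuous_barycentric n
  have hint {h : ℝ → E} (hh : ContDiff ℝ n h) :
      IntegrableOn (fun τ => iteratedDeriv n h (barycentric τ ⬝ᵥ x)) (cornerSimplex n) :=
    (Continuous.continuousOn (by fun_prop)).integrableOn_compact (isCompact_cornerSimplex n)
  simp only [divDiff_eq_setIntegral_cornerSimplex, iteratedDeriv_add hf.contDiffAt hg.contDiffAt]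
  exact integral_add (hint hf) (hint hg)

variable [CompleteSpace E]

theorem divDiff_zero (f : ℝ → E) (x : Fin 1 → ℝ) : divDiff f 0 x = f (x 0) := by
  simp [divDiff, measureReal_def, volume_pi]

theorem divDiff_succ {f : ℝ → E} (hf : ContDiff ℝ (n + 1 : ℕ) f) (x : Fin (n + 2) → ℝ) :
    divDiff f (n + 1) x = divDiff (dslope f (x 0)) n (Fin.tail x) := by
  have := continuous_barycentric (n + 1)
  have hpoint (t : ℝ) (τ : Fin n → ℝ) : barycentric (t • barycentric τ) ⬝ᵥ x =
      x 0 + t * (barycentric τ ⬝ᵥ Fin.tail x - x 0) := by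
    simp only [dotProduct, barycentric, Pi.smul_apply, smul_eq_mul, ← Finset.mul_sum,
      Fin.sum_univ_succ, Fin.cons_zero, Fin.cons_succ, sub_add_cancel, mul_one, mul_assoc, Fin.tail]
    ring
  rw [divDiff_eq_setIntegral_cornerSimplex, divDiff_eq_setIntegral_cornerSimplex,
    setIntegral_cornerSimplex_succ (by fun_prop)]
  simp only [iteratedDeriv_dslope hf, segmentMoment, hpoint]

end DivDiff

section Block

variable {E : Type*} [NormedAddCommGroup E] [NormedSpace ℝ E] {n : ℕ}

theorem val_sub_val_castSucc {i : Fin n} {b : Fin (n + 1)} (hib : i.castSucc < b) :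
    (b - i.castSucc : ℕ) = b - i.succ + 1 := by
  simp only [Fin.lt_def, Fin.val_castSucc, Fin.val_succ] at hib ⊢
  omega

theorem Ioc_castSucc_eq_Icc_succ (i : Fin n) (b : Fin (n + 1)) :
    Finset.Ioc i.castSucc b = Finset.Icc i.succ b := by
  ext c
  simp only [Finset.mem_Ioc, Finset.mem_Icc, Fin.castSucc_lt_iff_succ_le]

/-- The divided difference `f[x_a, …, x_b]` over a block of consecutive points; for `b < a` the
truncated subtraction makes it `f[x_a]`. -/
noncomputable def divDiffBlock (f : ℝ → E) (x : Fin (n + 1) → ℝ) (a b : Fin (n + 1)) : E :=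
  divDiff f (b.val - a.val) fun r => x ⟨a.val + r.val, by omega⟩

theorem divDiffBlock_add {f g : ℝ → E} {a b : Fin (n + 1)} (hf : ContDiff ℝ (b - a : ℕ) f)
    (hg : ContDiff ℝ (b - a : ℕ) g) (x : Fin (n + 1) → ℝ) :
    divDiffBlock (f + g) x a b = divDiffBlock f x a b + divDiffBlock g x a b :=
  divDiff_add hf hg _

theorem divDiffBlock_const_smul {f : ℝ → E} {a b : Fin (n + 1)} (hf : ContDiff ℝ (b - a : ℕ) f)
    (c : ℝ) (x : Fin (n + 1) → ℝ) :
    divDiffBlock (c • f) x a b = c • divDiffBlock f x a b :=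
  divDiff_const_smul hf c _

variable [CompleteSpace E]

theorem divDiffBlock_self (f : ℝ → E) (x : Fin (n + 1) → ℝ) (a : Fin (n + 1)) :
    divDiffBlock f x a a = f (x a) :=
  (divDiff_congr (Nat.sub_self a) f fun _ => congrArg x (Fin.ext (by dsimp only; omega))).trans
    (divDiff_zero f fun _ => x a)

theorem divDiffBlock_castSucc {f : ℝ → E} {i : Fin n} {b : Fin (n + 1)} (hib : i.castSucc < b)
    (hf : ContDiff ℝ (b - i.castSucc : ℕ) f) (x : Fin (n + 1) → ℝ) :
    divDiffBlock f x i.castSucc b = divDiffBlock (dslope f (x i.castSucc)) x i.succ b := by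
  have hlen := val_sub_val_castSucc hib
  rw [hlen] at hf
  calc divDiffBlock f x i.castSucc b
      = divDiff f (b - i.succ + 1) fun r => x ⟨i.castSucc + r, by omega⟩ :=
        divDiff_congr hlen f fun _ => rfl
    _ = divDiffBlock (dslope f (x i.castSucc)) x i.succ b := by
        rw [divDiff_succ hf]
        refine divDiff_congr rfl _ fun r => congrArg x (Fin.ext ?_)
        simp only [Fin.val_succ, Fin.val_castSucc, Fin.val_cast]
        omega

theorem divDiffBlock_smul_castSucc {u : ℝ → ℝ} {v : ℝ → E} {i : Fin n} {b : Fin (n + 1)}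
    (hib : i.castSucc < b) (hu : ContDiff ℝ (b - i.castSucc : ℕ) u)
    (hv : ContDiff ℝ (b - i.castSucc : ℕ) v) (x : Fin (n + 1) → ℝ) :
    divDiffBlock (u • v) x i.castSucc b =
      u (x i.castSucc) • divDiffBlock v x i.castSucc b +
        divDiffBlock (dslope u (x i.castSucc) • v) x i.succ b := by
  have hlen := val_sub_val_castSucc hib
  have hu₁ : ContDiff ℝ 1 u := hu.of_le (by norm_cast; omega)
  have hv₁ : ContDiff ℝ 1 v := hv.of_le (by norm_cast; omega)
  have hv₀ : ContDiff ℝ (b - i.succ : ℕ) v := hv.of_le (by norm_cast; omega)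
  have hu' := contDiff_dslope (hlen ▸ hu) (x i.castSucc)
  have hv' := contDiff_dslope (hlen ▸ hv) (x i.castSucc)
  have huv' : ContDiff ℝ (b - i.succ : ℕ) (u (x i.castSucc) • dslope v (x i.castSucc)) :=
    hv'.const_smul _
  rw [divDiffBlock_castSucc hib (hu.smul hv), dslope_smul (hu₁.differentiable_one _)
    (hv₁.differentiable_one _), divDiffBlock_add (hu'.smul hv₀) huv', divDiffBlock_const_smul hv',
    ← divDiffBlock_castSucc hib hv, add_comm]

theorem divDiffBlock_smul {u : ℝ → ℝ} {v : ℝ → E} {a b : Fin (n + 1)} (hab : a ≤ b)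
    (hu : ContDiff ℝ (b - a : ℕ) u) (hv : ContDiff ℝ (b - a : ℕ) v) (x : Fin (n + 1) → ℝ) :
    divDiffBlock (u • v) x a b =
      ∑ c ∈ Finset.Icc a b, divDiffBlock u x a c • divDiffBlock v x c b := by
  induction a using Fin.reverseInduction generalizing u v with
  | last =>
    obtain rfl : b = Fin.last n := Fin.last_le_iff.1 hab
    simp only [Finset.Icc_self, Finset.sum_singleton, divDiffBlock_self, Pi.smul_apply']
  | cast i ih =>
    rcases hab.eq_or_lt with rfl | hib
    · simp only [Finset.Icc_self, Finset.sum_singleton, divDiffBlock_self, Pi.smul_apply']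
    have hlen := val_sub_val_castSucc hib
    rw [divDiffBlock_smul_castSucc hib hu hv, ih (Fin.castSucc_lt_iff_succ_le.1 hib)
      (contDiff_dslope (hlen ▸ hu) _) (hv.of_le (by norm_cast; omega)),
      ← Finset.add_sum_Ioc_eq_sum_Icc hib.le, divDiffBlock_self, Ioc_castSucc_eq_Icc_succ]
    congr 1
    refine Finset.sum_congr rfl fun c hc => ?_
    obtain ⟨hic, hcb⟩ := Finset.mem_Icc.1 hc
    rw [divDiffBlock_castSucc (Fin.castSucc_lt_iff_succ_le.2 hic)
      (hu.of_le (mod_cast Nat.sub_le_sub_right hcb _))]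

theorem divDiffBlock_comp {g : ℝ → E} {φ : ℝ → ℝ} {a b : Fin (n + 1)} (hab : a < b)
    (hg : ContDiff ℝ (b - a : ℕ) g) (hφ : ContDiff ℝ (b - a : ℕ) φ) (x : Fin (n + 1) → ℝ) :
    divDiffBlock (g ∘ φ) x a b =
      ∑ c ∈ Finset.Ioc a b,
        divDiffBlock φ x a c • divDiffBlock (dslope g (φ (x a)) ∘ φ) x c b := by
  obtain ⟨i, rfl⟩ := Fin.exists_castSucc_eq.2 (Fin.ne_last_of_lt hab)
  have hlen := val_sub_val_castSucc hab
  have hφ₀ : ContDiff ℝ (b - i.succ : ℕ) φ := hφ.of_le (by norm_cast; omega)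
  have hφ₁ : ContDiff ℝ 1 φ := hφ.of_le (by norm_cast; omega)
  have hg₁ : ContDiff ℝ 1 g := hg.of_le (by norm_cast; omega)
  rw [divDiffBlock_castSucc hab (hg.comp hφ),
    dslope_comp (hφ₁.differentiable_one _) (hg₁.differentiable_one _),
    divDiffBlock_smul (Fin.castSucc_lt_iff_succ_le.1 hab) (contDiff_dslope (hlen ▸ hφ) _)
      ((contDiff_dslope (hlen ▸ hg) _).comp hφ₀), ← Ioc_castSucc_eq_Icc_succ]
  refine Finset.sum_congr rfl fun c hc => ?_
  obtain ⟨hic, hcb⟩ := Finset.mem_Ioc.1 hc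
  rw [divDiffBlock_castSucc hic (hφ.of_le (mod_cast Nat.sub_le_sub_right hcb _))]

end Block

section Chains

variable {α : Type*} [Fintype α] [LinearOrder α]

/-- The strictly increasing chains `a = c₀ < c₁ < ⋯ < c_k = b` with `k` steps. -/
def strictChains (k : ℕ) (a b : α) : Finset (Fin (k + 1) → α) :=
  {c | c 0 = a ∧ c (Fin.last k) = b ∧ ∀ j : Fin k, c j.castSucc < c j.succ}

variable {M : Type*} [AddCommMonoid M]

theorem sum_strictChains_zero (a b : α) (F : (Fin 1 → α) → M) :
    ∑ c ∈ strictChains 0 a b, F c = if a = b then F fun _ => a else 0 := by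
  have hmem (c : Fin 1 → α) : c ∈ strictChains 0 a b ↔ a = b ∧ c = fun _ => a := by
    simp only [strictChains, Finset.mem_filter_univ, Fin.last_zero, funext_iff,
      Fin.forall_fin_one, IsEmpty.forall_iff, and_true]
    grind
  split_ifs with hab
  · exact Finset.sum_eq_single_of_mem _ ((hmem _).2 ⟨hab, rfl⟩)
      fun c hc hne => absurd ((hmem c).1 hc).2 hne
  · exact Finset.sum_eq_zero fun c hc => absurd ((hmem c).1 hc).1 hab

theorem cons_mem_strictChains_succ {k : ℕ} {a b : α} {c : Fin (k + 1) → α} :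
    (Fin.cons a c : Fin (k + 2) → α) ∈ strictChains (k + 1) a b ↔
      a < c 0 ∧ c ∈ strictChains k (c 0) b := by
  simp only [strictChains, Finset.mem_filter_univ, Fin.cons_zero, ← Fin.succ_last, Fin.cons_succ,
    Fin.forall_fin_succ (n := k), Fin.castSucc_zero, ← Fin.succ_castSucc, true_and]
  tauto

theorem le_of_mem_strictChains {k : ℕ} {a b : α} {c : Fin (k + 1) → α}
    (hc : c ∈ strictChains k a b) : a ≤ b := by
  obtain ⟨rfl, rfl, hlt⟩ := (Finset.mem_filter.1 hc).2
  exact (Fin.strictMono_iff_lt_succ.2 hlt).monotone (Fin.zero_le _)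

theorem sum_strictChains_succ [LocallyFiniteOrder α] (k : ℕ) (a b : α)
    (F : (Fin (k + 2) → α) → M) :
    ∑ c ∈ strictChains (k + 1) a b, F c =
      ∑ a' ∈ Finset.Ioc a b, ∑ c ∈ strictChains k a' b, F (Fin.cons a c) := by
  have hhead {m : ℕ} {a' : α} {c : Fin (m + 1) → α} (hc : c ∈ strictChains m a' b) : c 0 = a' :=
    (Finset.mem_filter.1 hc).2.1
  rw [Finset.sum_sigma', eq_comm]
  refine Finset.sum_bij (fun p _ => Fin.cons a p.2) ?_ ?_ ?_ fun _ _ => rfl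
  · rintro ⟨a', c⟩ hp
    obtain ⟨ha', hc⟩ : a' ∈ _ ∧ c ∈ strictChains k a' b := Finset.mem_sigma.1 hp
    obtain rfl := hhead hc
    exact cons_mem_strictChains_succ.2 ⟨(Finset.mem_Ioc.1 ha').1, hc⟩
  · rintro ⟨a', c⟩ hp ⟨a'', c'⟩ hp' heq
    obtain rfl : c = c' := (Fin.cons_injective2 heq).2
    obtain rfl : a' = a'' := (hhead (Finset.mem_sigma.1 hp).2).symm.trans
      (hhead (Finset.mem_sigma.1 hp').2)
    rfl
  · intro c hc
    cases c using Fin.consCases with | _ a₀ c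
    obtain rfl : a₀ = a := hhead hc
    obtain ⟨hlt, hc'⟩ := cons_mem_strictChains_succ.1 hc
    exact ⟨⟨c 0, c⟩, Finset.mem_sigma.2
      ⟨Finset.mem_Ioc.2 ⟨hlt, le_of_mem_strictChains hc'⟩, hc'⟩, rfl⟩

end Chains

section ChainRule

variable {E : Type*} [NormedAddCommGroup E] [NormedSpace ℝ E] [CompleteSpace E] {n : ℕ}

/-- The contribution of the chains with `k` steps to the chain rule for `(g ∘ φ)[x_a, …, x_b]`. -/
noncomputable def chainSum (g : ℝ → E) (φ : ℝ → ℝ) (x : Fin (n + 1) → ℝ) (k : ℕ)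
    (a b : Fin (n + 1)) : E :=
  ∑ c ∈ strictChains k a b,
    (∏ j : Fin k, divDiffBlock φ x (c j.castSucc) (c j.succ)) • divDiff g k fun j => φ (x (c j))

theorem chainSum_zero (g : ℝ → E) (φ : ℝ → ℝ) (x : Fin (n + 1) → ℝ) (a b : Fin (n + 1)) :
    chainSum g φ x 0 a b = if a = b then g (φ (x a)) else 0 := by
  simp only [chainSum, sum_strictChains_zero, Finset.univ_eq_empty, Finset.prod_empty, one_smul,
    divDiff_zero]

theorem chainSum_succ {g : ℝ → E} {k : ℕ} (hg : ContDiff ℝ (k + 1 : ℕ) g) (φ : ℝ → ℝ)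
    (x : Fin (n + 1) → ℝ) (a b : Fin (n + 1)) :
    chainSum g φ x (k + 1) a b =
      ∑ a' ∈ Finset.Ioc a b,
        divDiffBlock φ x a a' • chainSum (dslope g (φ (x a))) φ x k a' b := by
  simp only [chainSum, sum_strictChains_succ, Finset.smul_sum]
  refine Finset.sum_congr rfl fun a' _ => Finset.sum_congr rfl fun c hc => ?_
  obtain rfl : c 0 = a' := (Finset.mem_filter.1 hc).2.1
  rw [divDiff_succ hg, Fin.prod_univ_succ, mul_smul]
  rfl

theorem divDiffBlock_comp_eq_sum_chainSum {K : ℕ} {g : ℝ → E} {φ : ℝ → ℝ} {a b : Fin (n + 1)}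
    (hab : a ≤ b) (hK : (b - a : ℕ) ≤ K) (hg : ContDiff ℝ K g) (hφ : ContDiff ℝ K φ)
    (x : Fin (n + 1) → ℝ) :
    divDiffBlock (g ∘ φ) x a b = ∑ k ∈ Finset.range (K + 1), chainSum g φ x k a b := by
  induction K generalizing g a with
  | zero =>
    obtain rfl : a = b := le_antisymm hab (Fin.le_def.2 (by omega))
    simp only [zero_add, Finset.sum_range_one, chainSum_zero, if_true, divDiffBlock_self,
      Function.comp_apply]
  | succ K ih =>
    have hsucc {k : ℕ} (hk : k ∈ Finset.range (K + 1)) :=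
      chainSum_succ (hg.of_le (mod_cast Finset.mem_range.1 hk : ((k + 1 : ℕ) : WithTop ℕ∞) ≤ _))
        φ x a b
    rw [Finset.sum_range_succ', Finset.sum_congr rfl fun k => hsucc, chainSum_zero]
    rcases hab.eq_or_lt with rfl | hab
    · simp only [Finset.Ioc_self, Finset.sum_empty, Finset.sum_const_zero, zero_add, if_true,
        divDiffBlock_self, Function.comp_apply]
    rw [if_neg hab.ne, add_zero, Finset.sum_comm,
      divDiffBlock_comp hab (hg.of_le (mod_cast hK)) (hφ.of_le (mod_cast hK))]
    refine Finset.sum_congr rfl fun c hc => ?_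
    obtain ⟨hac, hcb⟩ := Finset.mem_Ioc.1 hc
    rw [← Finset.smul_sum, ih hcb (by have := Fin.lt_def.1 hac; omega) (contDiff_dslope hg _)
      (hφ.of_le (by norm_cast; omega))]

theorem divDiff_chain_rule_general (n : ℕ) (hn : 1 ≤ n) (g : ℝ → E) (φ : ℝ → ℝ)
    (hg : ContDiff ℝ n g) (hφ : ContDiff ℝ n φ) (x : Fin (n + 1) → ℝ) :
    divDiff (fun u : ℝ => g (φ u)) n x =
      ∑ k ∈ Finset.Icc 1 n, ∑ c ∈ strictChains k 0 (Fin.last n),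
        (∏ j : Fin k, divDiffBlock φ x (c j.castSucc) (c j.succ)) •
          divDiff g k fun j => φ (x (c j)) := by
  have hends : (0 : Fin (n + 1)) ≠ Fin.last n := Fin.ne_of_lt (Fin.lt_def.2 hn)
  calc divDiff (fun u : ℝ => g (φ u)) n x
      = divDiffBlock (g ∘ φ) x 0 (Fin.last n) :=
        divDiff_congr rfl _ fun i => congrArg x (Fin.ext (by simp))
    _ = ∑ k ∈ Finset.range (n + 1), chainSum g φ x k 0 (Fin.last n) :=
        divDiffBlock_comp_eq_sum_chainSum (Fin.zero_le _) (by simp) hg hφ x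
    _ = ∑ k ∈ Finset.Icc 1 n, chainSum g φ x k 0 (Fin.last n) := by
        rw [Finset.range_eq_Ico, Finset.sum_eq_sum_Ico_succ_bot n.succ_pos, chainSum_zero,
          if_neg hends, zero_add, zero_add, Nat.succ_eq_add_one,
          Finset.Ico_add_one_right_eq_Icc]

end ChainRule

/-- Chain rule (Faà di Bruno type) for divided differences: for `f = g ∘ φ`,
`f[x₀,…,xₙ] = ∑_{k=1}^n ∑_{0 = i₀ < ⋯ < i_k = n} g[φ(x_{i₀}),…,φ(x_{i_k})]
∏_{j} φ[x_{i_j},…,x_{i_{j+1}}]`, the inner sum being over strictly increasing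
chains `c` from `0` to `n`. -/
theorem divDiff_chain_rule (n : ℕ) (hn : 1 ≤ n) (g φ : ℝ → ℝ)
    (hg : ContDiff ℝ (⊤ : ℕ∞) g) (hφ : ContDiff ℝ (⊤ : ℕ∞) φ) (x : Fin (n + 1) → ℝ) :
    divDiff (fun u : ℝ => g (φ u)) n x =
      ∑ k ∈ Finset.Icc 1 n,
        ∑ c ∈ Finset.univ.filter (fun c : Fin (k + 1) → Fin (n + 1) =>
            c 0 = 0 ∧ c (Fin.last k) = Fin.last n ∧
              ∀ j : Fin k, c j.castSucc < c j.succ),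
          divDiff g k (fun j => φ (x (c j))) *
            ∏ j : Fin k,
              divDiff φ ((c j.succ).val - (c j.castSucc).val)
                (fun r : Fin ((c j.succ).val - (c j.castSucc).val + 1) =>
                  x ⟨(c j.castSucc).val + r.val, by
                    have h1 := r.isLt; have h2 := (c j.succ).isLt; omega⟩) := by
  simp only [mul_comm (divDiff g _ _)]
  exact divDiff_chain_rule_general n hn g φ (hg.of_le (mod_cast le_top))
    (hφ.of_le (mod_cast le_top)) x
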